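/- arXiv:1907.04247 — 5 statements merged into one kernel-verified Lean document; each statement's English description precedes it below -/
import Mathlib

section
/- Let N_v, r, d ≥ 1, let eₙ ∈ ℝ^{N_v} be a unit vector, and set C = eₙ eₙᵀ − I_{N_v}. Let A_σ ∈ ℝ^{r×r} be invertible, let A_1, …, A_d ∈ ℝ^{r×r}, and let Π_1, …, Π_d ∈ ℝ^{N_v×N_v} satisfy eₙᵀ Π_k eₙ = 0 and eₙᵀ Π_j Π_k eₙ = δ_{jk}/d for all 1 ≤ j, k ≤ d. Let Δt > 0 and suppose L₀ⁿ, L₀, L₁, L₂ ∈ ℝ^{r×N_v} satisfy: (i) A_σ L₀ C = 0; (ii) Σ_{k=1}^d A_k L₀ Π_k = A_σ L₁ C; (iii) (L₀ − L₀ⁿ)/Δt + Σ_{k=1}^d A_k L₁ Π_k = A_σ L₂ C. Then L₀ = l₀ eₙᵀ with l₀ := L₀ eₙ, and l₀ satisfies the implicit-Euler discrete diffusion update (l₀ − L₀ⁿ eₙ)/Δt − (1/d) Σ_{k=1}^d A_k A_σ^{-1} A_k l₀ = 0. -/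
/-!
The matrix `C = e eᵀ - 1` kills `e` and acts as `-1` on `e`'s orthogonal complement. Cancelling the
invertible `Aσ` in the leading-order equation gives `L₀ = L₀ e eᵀ`. By the first quadrature
identity the vectors `Πⱼ e` are orthogonal to `e`, so testing the next-order equation against
`Πⱼ e` yields, by the second identity, the closure `L₁ Πⱼ e = -(1/d) Aσ⁻¹ Aⱼ L₀ e`. Testing the
last equation against `e` annihilates its right-hand side, and inserting the closure gives the
diffusion update.
-/

open Matrix BigOperators

/-- Hilbert-expansion hierarchy of the implicit-Euler L-step.
Under the velocity-quadrature identities eₙᵀΠ_keₙ = 0 and eₙᵀΠ_jΠ_keₙ = δ_{jk}/d,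
the O(1/ε²), O(1/ε), O(1) equations imply L₀ = (L₀ eₙ) eₙᵀ and the implicit-Euler
discrete diffusion update (l₀ − L₀ⁿ eₙ)/Δt − (1/d) Σ_k A_k A_σ⁻¹ A_k l₀ = 0. -/
theorem stmt3 (Nv r d : ℕ) (hNv : 1 ≤ Nv) (hr : 1 ≤ r) (hd : 1 ≤ d)
    (eN : Fin Nv → ℝ) (hunit : eN ⬝ᵥ eN = 1)
    (C : Matrix (Fin Nv) (Fin Nv) ℝ) (hC : C = vecMulVec eN eN - 1)
    (Aσ : Matrix (Fin r) (Fin r) ℝ) (hAσ : IsUnit Aσ.det)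
    (A : Fin d → Matrix (Fin r) (Fin r) ℝ)
    (Pk : Fin d → Matrix (Fin Nv) (Fin Nv) ℝ)
    (hP1 : ∀ k, eN ⬝ᵥ (Pk k *ᵥ eN) = 0)
    (hP2 : ∀ j k, eN ⬝ᵥ ((Pk j * Pk k) *ᵥ eN) = if j = k then 1 / (d : ℝ) else 0)
    (Δt : ℝ) (hΔt : 0 < Δt)
    (L₀n L₀ L₁ L₂ : Matrix (Fin r) (Fin Nv) ℝ)
    (h1 : Aσ * L₀ * C = 0)
    (h2 : ∑ k, A k * L₀ * Pk k = Aσ * L₁ * C)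
    (h3 : Δt⁻¹ • (L₀ - L₀n) + ∑ k, A k * L₁ * Pk k = Aσ * L₂ * C) :
    L₀ = vecMulVec (L₀ *ᵥ eN) eN ∧
      Δt⁻¹ • (L₀ *ᵥ eN - L₀n *ᵥ eN) -
        (d : ℝ)⁻¹ • ∑ k, (A k * Aσ⁻¹ * A k) *ᵥ (L₀ *ᵥ eN) = 0 := by
  have hCv : ∀ w, C *ᵥ w = (eN ⬝ᵥ w) • eN - w := by
    intro w
    rw [hC, sub_mulVec, one_mulVec, vecMulVec_mulVec]
    simp
  have hCe : C *ᵥ eN = 0 := by rw [hCv, hunit, one_smul, sub_self]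
  have hL0 : L₀ = vecMulVec (L₀ *ᵥ eN) eN := by
    have h : L₀ * C = 0 := by
      have := congrArg (fun M => Aσ⁻¹ * M) h1
      simpa [Matrix.mul_assoc, nonsing_inv_mul_cancel_left _ _ hAσ] using this
    rw [hC, Matrix.mul_sub, Matrix.mul_one, mul_vecMulVec] at h
    exact (sub_eq_zero.mp h).symm
  refine ⟨hL0, ?_⟩
  have hL0v : ∀ x, L₀ *ᵥ x = (eN ⬝ᵥ x) • (L₀ *ᵥ eN) := by
    intro x
    conv_lhs => rw [hL0, vecMulVec_mulVec]
    simp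
  have hclosure : ∀ j, L₁ *ᵥ (Pk j *ᵥ eN) = -((d : ℝ)⁻¹ • (Aσ⁻¹ *ᵥ (A j *ᵥ (L₀ *ᵥ eN)))) := by
    intro j
    have h := congrArg (fun M => Aσ⁻¹ *ᵥ (M *ᵥ (Pk j *ᵥ eN))) h2
    simp only [sum_mulVec, ← mulVec_mulVec, hCv, hP1, zero_smul, zero_sub, mulVec_neg] at h
    have hk : ∀ k, A k *ᵥ (L₀ *ᵥ (Pk k *ᵥ (Pk j *ᵥ eN))) =
        if k = j then (d : ℝ)⁻¹ • (A k *ᵥ (L₀ *ᵥ eN)) else 0 := by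
      intro k
      rw [hL0v, mulVec_mulVec, hP2, mulVec_smul]
      split_ifs <;> simp
    simp only [hk, Finset.sum_ite_eq', Finset.sum_ite_eq, Finset.mem_univ, if_true,
      mulVec_smul] at h
    rw [mulVec_mulVec (L₁ *ᵥ _), nonsing_inv_mul _ hAσ, one_mulVec] at h
    rw [h, neg_neg]
  have h := congrArg (fun M => M *ᵥ eN) h3
  simp only [add_mulVec, smul_mulVec, sub_mulVec, sum_mulVec, ← mulVec_mulVec, hCe, mulVec_zero,
    hclosure, mulVec_neg, mulVec_smul, Finset.sum_neg_distrib, ← Finset.smul_sum] at h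
  simpa only [← mulVec_mulVec, sub_eq_add_neg] using h
end

section
/- Let r, d ≥ 1, let α ∈ ℝ^r with ‖α‖₂ = 1, and set Γ = α αᵀ − I_r. Let A_σ ∈ ℝ^{r×r} be invertible, let A_1, …, A_d ∈ ℝ^{r×r}, and let Ξ_1, …, Ξ_d ∈ ℝ^{r×r} satisfy αᵀ Ξ_k α = 0 and αᵀ Ξ_j Ξ_k α = δ_{jk}/d for all 1 ≤ j, k ≤ d. Let Δt > 0 and suppose S^{prev}, S₀, S₁, S₂ ∈ ℝ^{r×r} satisfy: (i) A_σ S₀ Γ = 0; (ii) Σ_{k=1}^d A_k S₀ Ξ_k = A_σ S₁ Γ; (iii) (S₀ − S^{prev})/Δt − Σ_{k=1}^d A_k S₁ Ξ_k = −A_σ S₂ Γ. Then S₀ = s₀ αᵀ with s₀ := S₀ α, and (s₀ − S^{prev} α)/Δt + (1/d) Σ_{k=1}^d A_k A_σ^{-1} A_k s₀ = 0. -/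
open Matrix BigOperators

/-!
`-Γ` is the orthogonal projection onto the complement of `α`: `M Γ v = (α ⬝ v) M α - M v` for every
matrix `M`, so `Γ` kills `α`, and `M Γ = 0` forces `M = (M α) αᵀ`. Since `Aσ` is invertible, the
first equation gives `S₀ = s₀ αᵀ`. Evaluating the second equation at `w = Ξ_k α`, which is
orthogonal to `α`, gives `-Aσ S₁ w = ∑ j, (α ⬝ Ξ_j Ξ_k α) A_j s₀ = d⁻¹ A_k s₀`. This determines
`S₁ Ξ_k α`, the only information on `S₁` that is needed when the third equation is applied to `α`,
where the `S₂` term drops out.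
-/

/-- The action of `M Γ` on a vector, for `Γ = ααᵀ - 1`. -/
lemma mul_proj_mulVec {r : ℕ} (α : Fin r → ℝ) (M : Matrix (Fin r) (Fin r) ℝ) (v : Fin r → ℝ) :
    (M * (vecMulVec α α - 1)) *ᵥ v = (α ⬝ᵥ v) • (M *ᵥ α) - M *ᵥ v := by
  rw [← mulVec_mulVec, sub_mulVec, one_mulVec, mulVec_sub, vecMulVec_mulVec, op_smul_eq_smul,
    mulVec_smul]

/-- Hilbert-expansion hierarchy of the implicit-Euler S-step.
With Γ = ααᵀ − I_r, ‖α‖₂ = 1, αᵀΞ_kα = 0, αᵀΞ_jΞ_kα = δ_{jk}/d, the equations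
(i)–(iii) imply S₀ = s₀ αᵀ with s₀ = S₀ α, and
(s₀ − S^{prev} α)/Δt + (1/d) Σ_k A_k A_σ⁻¹ A_k s₀ = 0. -/
theorem stmt5 (r d : ℕ) (hr : 1 ≤ r) (hd : 1 ≤ d)
    (α : Fin r → ℝ) (hα : α ⬝ᵥ α = 1)
    (Γ : Matrix (Fin r) (Fin r) ℝ) (hΓ : Γ = vecMulVec α α - 1)
    (Aσ : Matrix (Fin r) (Fin r) ℝ) (hAσ : IsUnit Aσ.det)
    (A : Fin d → Matrix (Fin r) (Fin r) ℝ)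
    (Ξ : Fin d → Matrix (Fin r) (Fin r) ℝ)
    (hΞ1 : ∀ k, α ⬝ᵥ (Ξ k *ᵥ α) = 0)
    (hΞ2 : ∀ j k, α ⬝ᵥ ((Ξ j * Ξ k) *ᵥ α) = if j = k then 1 / (d : ℝ) else 0)
    (Δt : ℝ) (hΔt : 0 < Δt)
    (Sprev S₀ S₁ S₂ : Matrix (Fin r) (Fin r) ℝ)
    (h1 : Aσ * S₀ * Γ = 0)
    (h2 : ∑ k, A k * S₀ * Ξ k = Aσ * S₁ * Γ)
    (h3 : Δt⁻¹ • (S₀ - Sprev) - ∑ k, A k * S₁ * Ξ k = -(Aσ * S₂ * Γ)) :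
    S₀ = vecMulVec (S₀ *ᵥ α) α ∧
      Δt⁻¹ • (S₀ *ᵥ α - Sprev *ᵥ α) +
        (d : ℝ)⁻¹ • ∑ k, (A k * Aσ⁻¹ * A k) *ᵥ (S₀ *ᵥ α) = 0 := by
  subst hΓ
  have hinv : Aσ⁻¹ * Aσ = 1 := nonsing_inv_mul _ hAσ
  have hS0 : S₀ = vecMulVec (S₀ *ᵥ α) α := by
    have h : S₀ * (vecMulVec α α - 1) = 0 := by
      have := congrArg (fun M => Aσ⁻¹ * M) h1
      simpa [← Matrix.mul_assoc, hinv] using this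
    rw [Matrix.mul_sub, Matrix.mul_one, mul_vecMulVec, sub_eq_zero] at h
    exact h.symm
  refine ⟨hS0, ?_⟩
  have hS0v : ∀ v, S₀ *ᵥ v = (α ⬝ᵥ v) • (S₀ *ᵥ α) := by
    intro v
    conv_lhs => rw [hS0]
    rw [vecMulVec_mulVec, op_smul_eq_smul]
  have hw : ∀ k, S₁ *ᵥ (Ξ k *ᵥ α) = -((d : ℝ)⁻¹ • (Aσ⁻¹ *ᵥ (A k *ᵥ (S₀ *ᵥ α)))) := by
    intro k
    have h := congrArg (fun M => M *ᵥ (Ξ k *ᵥ α)) h2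
    simp only [mul_proj_mulVec, hΞ1, zero_smul, zero_sub, sum_mulVec] at h
    have hterm : ∀ j, (A j * S₀ * Ξ j) *ᵥ (Ξ k *ᵥ α)
        = (if j = k then 1 / (d : ℝ) else 0) • (A j *ᵥ (S₀ *ᵥ α)) := by
      intro j
      rw [← mulVec_mulVec, ← mulVec_mulVec, hS0v, mulVec_mulVec, hΞ2, mulVec_smul]
    simp only [hterm, ite_smul, zero_smul, Finset.sum_ite_eq', Finset.mem_univ, if_true,
      one_div] at h
    rw [← mulVec_smul, h, mulVec_neg, neg_neg, ← mulVec_mulVec, mulVec_mulVec _ Aσ⁻¹ Aσ, hinv,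
      one_mulVec]
  have h := congrArg (fun M => M *ᵥ α) h3
  simp only [sub_mulVec, neg_mulVec, smul_mulVec, mul_proj_mulVec, hα, one_smul, sub_self,
    neg_zero, sum_mulVec] at h
  have hterm : ∀ k, (A k * S₁ * Ξ k) *ᵥ α
      = -((d : ℝ)⁻¹ • ((A k * Aσ⁻¹ * A k) *ᵥ (S₀ *ᵥ α))) := by
    intro k
    rw [← mulVec_mulVec, ← mulVec_mulVec, hw, mulVec_neg, mulVec_smul, ← mulVec_mulVec,
      ← mulVec_mulVec]
  simpa only [hterm, Finset.sum_neg_distrib, ← Finset.smul_sum, sub_neg_eq_add] using h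
end

section
/- Let N_x, r, d ≥ 1, let α ∈ ℝ^r with ‖α‖₂ = 1, set Γ = α αᵀ − I_r, and let Ξ_1, …, Ξ_d ∈ ℝ^{r×r} satisfy αᵀ Ξ_k α = 0 and αᵀ Ξ_j Ξ_k α = δ_{jk}/d for all 1 ≤ j, k ≤ d. Let Σ̃ ∈ ℝ^{N_x×N_x} be invertible, let D_1, …, D_d ∈ ℝ^{N_x×N_x}, let Δt > 0, and suppose K^{prev}, K₀, K₁, K₂ ∈ ℝ^{N_x×r} satisfy: (i) Σ̃ K₀ Γ = 0; (ii) Σ_{k=1}^d D_k K₀ Ξ_k = Σ̃ K₁ Γ; (iii) (K₀ − K^{prev})/Δt + Σ_{k=1}^d D_k K₁ Ξ_k = Σ̃ K₂ Γ. Then K₀ = k₀ αᵀ with k₀ := K₀ α, and k₀ satisfies the implicit-Euler discretization of the diffusion equation: (k₀ − K^{prev} α)/Δt − (1/d) Σ_{k=1}^d D_k Σ̃^{-1} D_k k₀ = 0. -/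
open Matrix BigOperators

/-!
Since `Γ = ααᵀ - 1`, every matrix splits as `K = (Kα)αᵀ - KΓ`, and `Γα = 0` because `α` is a unit
vector. Cancelling `Σ̃` in the first equation gives `K₀Γ = 0`, so `K₀ = k₀αᵀ`. Cancelling it in the
second determines `K₁Γ = ∑ₖ Σ̃⁻¹ Dₖ k₀ (αᵀΞₖ)`. Applying the third equation to `α` removes `K₂`, and
in the flux term `Dⱼ K₁ Ξⱼ α` the part `(K₁α)αᵀ` of `K₁` drops out because `αᵀΞⱼα = 0`, while
the part `-K₁Γ` contributes `-(1/d) Dⱼ Σ̃⁻¹ Dⱼ k₀` because `αᵀΞₖΞⱼα = δₖⱼ/d`.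
-/

theorem vecMulVec_mulVec_eq_smul {m n : ℕ} (u : Fin m → ℝ) (v w : Fin n → ℝ) :
    vecMulVec u v *ᵥ w = (v ⬝ᵥ w) • u := by
  ext i
  simp [vecMulVec_mulVec, mul_comm]

/-- The splitting of `K` along the projection `ααᵀ` onto the span of `α`. -/
theorem eq_vecMulVec_sub_mul {m n : ℕ} (K : Matrix (Fin m) (Fin n) ℝ) (α : Fin n → ℝ) :
    K = vecMulVec (K *ᵥ α) α - K * (vecMulVec α α - 1) := by
  rw [Matrix.mul_sub, mul_vecMulVec, Matrix.mul_one]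
  abel

/-- Hilbert-expansion hierarchy of the implicit-Euler K-step.
With Γ = ααᵀ − I_r, ‖α‖₂ = 1, αᵀΞ_kα = 0, αᵀΞ_jΞ_kα = δ_{jk}/d and Σ̃ invertible,
the equations (i)–(iii) imply K₀ = k₀ αᵀ with k₀ = K₀ α, and
(k₀ − K^{prev} α)/Δt − (1/d) Σ_k D_k Σ̃⁻¹ D_k k₀ = 0. -/
theorem stmt6 (Nx r d : ℕ) (hNx : 1 ≤ Nx) (hr : 1 ≤ r) (hd : 1 ≤ d)
    (α : Fin r → ℝ) (hα : α ⬝ᵥ α = 1)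
    (Γ : Matrix (Fin r) (Fin r) ℝ) (hΓ : Γ = vecMulVec α α - 1)
    (Ξ : Fin d → Matrix (Fin r) (Fin r) ℝ)
    (hΞ1 : ∀ k, α ⬝ᵥ (Ξ k *ᵥ α) = 0)
    (hΞ2 : ∀ j k, α ⬝ᵥ ((Ξ j * Ξ k) *ᵥ α) = if j = k then 1 / (d : ℝ) else 0)
    (Sg : Matrix (Fin Nx) (Fin Nx) ℝ) (hSg : IsUnit Sg.det)
    (D : Fin d → Matrix (Fin Nx) (Fin Nx) ℝ)
    (Δt : ℝ) (hΔt : 0 < Δt)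
    (Kprev K₀ K₁ K₂ : Matrix (Fin Nx) (Fin r) ℝ)
    (h1 : Sg * K₀ * Γ = 0)
    (h2 : ∑ k, D k * K₀ * Ξ k = Sg * K₁ * Γ)
    (h3 : Δt⁻¹ • (K₀ - Kprev) + ∑ k, D k * K₁ * Ξ k = Sg * K₂ * Γ) :
    K₀ = vecMulVec (K₀ *ᵥ α) α ∧
      Δt⁻¹ • (K₀ *ᵥ α - Kprev *ᵥ α) -
        (d : ℝ)⁻¹ • ∑ k, (D k * Sg⁻¹ * D k) *ᵥ (K₀ *ᵥ α) = 0 := by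
  have hΓα : Γ *ᵥ α = 0 := by
    rw [hΓ, sub_mulVec, vecMulVec_mulVec_eq_smul, hα, one_smul, one_mulVec, sub_self]
  have hcancel : ∀ M : Matrix (Fin Nx) (Fin r) ℝ, Sg⁻¹ * (Sg * M) = M := fun M =>
    nonsing_inv_mul_cancel_left _ M hSg
  have hK₀Γ : K₀ * Γ = 0 := by
    rw [← hcancel (K₀ * Γ), ← Matrix.mul_assoc Sg, h1, Matrix.mul_zero]
  have hK₀ : K₀ = vecMulVec (K₀ *ᵥ α) α := by
    have h := eq_vecMulVec_sub_mul K₀ α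
    rwa [← hΓ, hK₀Γ, sub_zero] at h
  refine ⟨hK₀, ?_⟩
  have hK₁Γ : K₁ * Γ = ∑ k, Sg⁻¹ * (D k * K₀ * Ξ k) := by
    rw [← hcancel (K₁ * Γ), ← Matrix.mul_assoc Sg, ← h2, Matrix.mul_sum]
  have hK₀Ξ : ∀ j k, (K₀ * (Ξ k * Ξ j)) *ᵥ α
      = (if k = j then 1 / (d : ℝ) else 0) • (K₀ *ᵥ α) := by
    intro j k
    rw [← mulVec_mulVec, ← hΞ2 k j, ← vecMulVec_mulVec_eq_smul, ← hK₀]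
  have hK₁Ξ : ∀ j, K₁ *ᵥ (Ξ j *ᵥ α) = -((d : ℝ)⁻¹ • (Sg⁻¹ * D j) *ᵥ (K₀ *ᵥ α)) := by
    intro j
    have hsplit : K₁ *ᵥ (Ξ j *ᵥ α) = -((K₁ * Γ) *ᵥ (Ξ j *ᵥ α)) := by
      conv_lhs => rw [eq_vecMulVec_sub_mul K₁ α, ← hΓ]
      rw [sub_mulVec, vecMulVec_mulVec_eq_smul, hΞ1, zero_smul, zero_sub]
    have hterm : ∀ k, (Sg⁻¹ * (D k * K₀ * Ξ k)) *ᵥ (Ξ j *ᵥ α)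
        = if k = j then (d : ℝ)⁻¹ • (Sg⁻¹ * D j) *ᵥ (K₀ *ᵥ α) else 0 := by
      intro k
      have hassoc : Sg⁻¹ * (D k * K₀ * Ξ k) * Ξ j = Sg⁻¹ * D k * (K₀ * (Ξ k * Ξ j)) := by
        simp only [Matrix.mul_assoc]
      rw [mulVec_mulVec, hassoc, ← mulVec_mulVec, hK₀Ξ, mulVec_smul]
      split_ifs with h
      · rw [h, one_div]
      · rw [zero_smul]
    rw [hsplit, hK₁Γ, sum_mulVec, Finset.sum_congr rfl fun k _ => hterm k]
    simp
  have hflux : ∀ j, (D j * K₁ * Ξ j) *ᵥ α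
      = -((d : ℝ)⁻¹ • (D j * Sg⁻¹ * D j) *ᵥ (K₀ *ᵥ α)) := by
    intro j
    rw [← mulVec_mulVec, ← mulVec_mulVec, hK₁Ξ, mulVec_neg, mulVec_smul, mulVec_mulVec,
      Matrix.mul_assoc]
  have h := congrArg (· *ᵥ α) h3
  simp only [add_mulVec, smul_mulVec, sub_mulVec, sum_mulVec, hflux] at h
  rw [← mulVec_mulVec, hΓα, mulVec_zero, Finset.sum_neg_distrib, ← Finset.smul_sum,
    ← sub_eq_add_neg] at h
  exact h
end

section
/- Let r, d ≥ 1, let α ∈ ℝ^r with ‖α‖₂ = 1, set Γ = α αᵀ − I_r, let A_σ ∈ ℝ^{r×r} be invertible, let A_1, …, A_d ∈ ℝ^{r×r}, and let Ξ_1, …, Ξ_d ∈ ℝ^{r×r} satisfy αᵀ Ξ_k α = 0 and αᵀ Ξ_j Ξ_k α = δ_{jk}/d for all 1 ≤ j, k ≤ d. Let Δt > 0, suppose S₀^{prev} = s^{prev} αᵀ for some s^{prev} ∈ ℝ^r (well-prepared data), and suppose S₀, S₁, S₁^{prev}, S₂, S₂^{prev} ∈ ℝ^{r×r} satisfy the Crank–Nicolson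 hierarchy: (i) A_σ (S₀ + S₀^{prev}) Γ = 0; (ii) Σ_{k=1}^d A_k (S₀ + S₀^{prev}) Ξ_k = A_σ (S₁ + S₁^{prev}) Γ; (iii) (S₀ − S₀^{prev})/Δt − (1/2) Σ_{k=1}^d A_k (S₁ + S₁^{prev}) Ξ_k = −(1/2) A_σ (S₂ + S₂^{prev}) Γ. Then S₀ = s₀ αᵀ with s₀ := S₀ α, and (s₀ − s^{prev})/Δt + (1/(2d)) Σ_{k=1}^d A_k A_σ^{-1} A_k (s₀ + s^{prev}) = 0. -/
open Matrix BigOperators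

/-!
The matrix `Γ = ααᵀ - 1` kills `α` and acts as `-1` on vectors orthogonal to `α`.
Level (i) therefore forces `S₀ + S₀prev`, hence `S₀`, to be rank one along `α`.
Since `Ξ k α ⟂ α`, evaluating level (ii) at `Ξ k α` determines `(S₁ + S₁prev) Ξ k α`, and the
second-moment identity `αᵀ Ξ j Ξ k α = δ_{jk}/d` leaves only the term `j = k`, namely
`-(1/d) Aσ⁻¹ A k (s₀ + sprev)`. Evaluating level (iii) at `α` removes its right-hand side and,
after substitution of that value, gives the diffusion update.
-/

/-- Crank–Nicolson hierarchy of the CNIE S-step with well-prepared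
data S₀^{prev} = s^{prev} αᵀ. With Γ = ααᵀ − I_r, ‖α‖₂ = 1, αᵀΞ_kα = 0,
αᵀΞ_jΞ_kα = δ_{jk}/d, the equations (i)–(iii) imply S₀ = s₀ αᵀ with s₀ = S₀ α,
and (s₀ − s^{prev})/Δt + (1/(2d)) Σ_k A_k A_σ⁻¹ A_k (s₀ + s^{prev}) = 0. -/
theorem stmt10 (r d : ℕ) (hr : 1 ≤ r) (hd : 1 ≤ d)
    (α : Fin r → ℝ) (hα : α ⬝ᵥ α = 1)
    (Γ : Matrix (Fin r) (Fin r) ℝ) (hΓ : Γ = vecMulVec α α - 1)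
    (Aσ : Matrix (Fin r) (Fin r) ℝ) (hAσ : IsUnit Aσ.det)
    (A : Fin d → Matrix (Fin r) (Fin r) ℝ)
    (Ξ : Fin d → Matrix (Fin r) (Fin r) ℝ)
    (hΞ1 : ∀ k, α ⬝ᵥ (Ξ k *ᵥ α) = 0)
    (hΞ2 : ∀ j k, α ⬝ᵥ ((Ξ j * Ξ k) *ᵥ α) = if j = k then 1 / (d : ℝ) else 0)
    (Δt : ℝ) (hΔt : 0 < Δt)
    (sprev : Fin r → ℝ)
    (S₀prev S₀ S₁ S₁prev S₂ S₂prev : Matrix (Fin r) (Fin r) ℝ)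
    (hwp : S₀prev = vecMulVec sprev α)
    (h1 : Aσ * (S₀ + S₀prev) * Γ = 0)
    (h2 : ∑ k, A k * (S₀ + S₀prev) * Ξ k = Aσ * (S₁ + S₁prev) * Γ)
    (h3 : Δt⁻¹ • (S₀ - S₀prev) - (1 / 2 : ℝ) • ∑ k, A k * (S₁ + S₁prev) * Ξ k =
        -((1 / 2 : ℝ) • (Aσ * (S₂ + S₂prev) * Γ))) :
    S₀ = vecMulVec (S₀ *ᵥ α) α ∧
      Δt⁻¹ • (S₀ *ᵥ α - sprev) +
        (1 / (2 * (d : ℝ))) • ∑ k, (A k * Aσ⁻¹ * A k) *ᵥ (S₀ *ᵥ α + sprev) = 0 := by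
  -- `Γ` annihilates `α` and acts as `-1` on the orthogonal complement of `α`.
  have hΓv : ∀ v, Γ *ᵥ v = (α ⬝ᵥ v) • α - v := by
    intro v
    rw [hΓ, sub_mulVec, one_mulVec, vecMulVec_mulVec, op_smul_eq_smul]
  have hΓα : Γ *ᵥ α = 0 := by rw [hΓv, hα, one_smul, sub_self]
  have hcancel : ∀ M : Matrix (Fin r) (Fin r) ℝ, Aσ⁻¹ * (Aσ * M) = M := fun M =>
    nonsing_inv_mul_cancel_left _ M hAσ
  have hpα : S₀prev *ᵥ α = sprev := by
    rw [hwp, vecMulVec_mulVec, hα, op_smul_eq_smul, one_smul]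
  have hsum : S₀ + S₀prev = vecMulVec (S₀ *ᵥ α + sprev) α := by
    have h := congrArg (fun M => Aσ⁻¹ * M) h1
    simp only [Matrix.mul_assoc, hcancel, Matrix.mul_zero] at h
    rw [hΓ, Matrix.mul_sub, Matrix.mul_one, mul_vecMulVec, sub_eq_zero, add_mulVec, hpα] at h
    exact h.symm
  refine ⟨?_, ?_⟩
  · rw [add_vecMulVec, ← hwp] at hsum
    exact add_right_cancel hsum
  set s := S₀ *ᵥ α + sprev with hs
  -- Level (ii) evaluated at `Ξ k α`, which is orthogonal to `α`.
  have key : ∀ k, (S₁ + S₁prev) *ᵥ (Ξ k *ᵥ α) = -((1 / (d : ℝ)) • (Aσ⁻¹ *ᵥ (A k *ᵥ s))) := by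
    intro k
    have h := congrArg (fun M => (Aσ⁻¹ * M) *ᵥ (Ξ k *ᵥ α)) h2
    simp only [Matrix.mul_assoc, hcancel] at h
    rw [← mulVec_mulVec, ← mulVec_mulVec (Ξ k *ᵥ α) (S₁ + S₁prev), hΓv, hΞ1, zero_smul, zero_sub, mulVec_neg, sum_mulVec] at h
    have h' : ∀ j, (A j * ((S₀ + S₀prev) * Ξ j)) *ᵥ (Ξ k *ᵥ α)
        = if j = k then (1 / (d : ℝ)) • (A j *ᵥ s) else 0 := by
      intro j
      rw [← mulVec_mulVec, ← mulVec_mulVec, mulVec_mulVec α, hsum, vecMulVec_mulVec, hΞ2,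
        op_smul_eq_smul]
      split_ifs <;> simp [mulVec_smul]
    simp only [h', Finset.sum_ite_eq', Finset.mem_univ, if_true, mulVec_smul] at h
    rw [h, neg_neg]
  have h := congrArg (fun M => M *ᵥ α) h3
  simp only [sub_mulVec, smul_mulVec, neg_mulVec, sum_mulVec, ← mulVec_mulVec, hΓα, mulVec_zero,
    smul_zero, neg_zero, hpα, key, mulVec_neg, mulVec_smul, Finset.sum_neg_distrib, smul_neg,
    sub_neg_eq_add, ← Finset.smul_sum, smul_smul] at h
  simp only [← mulVec_mulVec]
  rw [← h]
  congr 2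
  ring
end

section
/- Let N ≥ 1, d ≥ 1, r ≥ d+1. Let D_1, …, D_d ∈ ℝ^{N×N} be skew-symmetric matrices and let k ∈ ℝ^N be such that the Gram matrix ℋ ∈ ℝ^{d×d} with entries ℋ_{ij} = (D_i k)ᵀ (D_j k) is invertible. Let X ∈ ℝ^{N×r} have full column rank, with first column equal to k and (i+1)-th column equal to −D_i k for i = 1, …, d. Let Σ̃ ∈ ℝ^{N×N} be symmetric positive definite, and set A_σ = Xᵀ Σ̃ X and A_i = Xᵀ D_i X for i = 1, …, d. Then the d+1 vectors A_σ e₁, A_1 e₁, …, A_d e₁ ∈ ℝ^r are linearly independent (where e₁ is the first standard basis vector of ℝ^r); equivalently, the r×(d+1) matrix with these columns has rank d+1. -/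
open Matrix BigOperators

/-!
Since `X e₁ = k`, a relation `c₀ A_σ e₁ + ∑ cⱼ Aⱼ e₁ = 0` says that `Xᵀ w = 0` for
`w = c₀ Σ̃ k + ∑ cⱼ Dⱼ k`, that is, `w` is orthogonal to every column of `X`. Orthogonality to the
column `k` gives `c₀ (kᵀ Σ̃ k) = 0`, because `kᵀ Dⱼ k = 0` by skew-symmetry; as `k ≠ 0` (otherwise
the Gram matrix `ℋ` would vanish), `c₀ = 0`. Orthogonality to the columns `-Dᵢ k` then reads
`ℋ c = 0`, hence `c = 0`.
-/

theorem skew_quadratic_form_eq_zero {n : Type*} [Fintype n] (M : Matrix n n ℝ) (hM : Mᵀ = -M)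
    (k : n → ℝ) : k ⬝ᵥ (M *ᵥ k) = 0 := by
  have h : k ⬝ᵥ (M *ᵥ k) = -(k ⬝ᵥ (M *ᵥ k)) := by
    calc k ⬝ᵥ (M *ᵥ k) = (Mᵀ *ᵥ k) ⬝ᵥ k := by rw [dotProduct_mulVec, mulVec_transpose]
      _ = -(k ⬝ᵥ (M *ᵥ k)) := by rw [hM, neg_mulVec, neg_dotProduct, dotProduct_comm]
  linarith

/-- Let D_1, …, D_d be skew-symmetric, k ∈ ℝ^N with invertible Gram
matrix ℋ_{ij} = (D_i k)ᵀ(D_j k). Let X ∈ ℝ^{N×r} have full column rank, first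
column k and (i+1)-th column −D_i k. Let Σ̃ be symmetric positive definite,
A_σ = XᵀΣ̃X, A_i = XᵀD_iX. Then the d+1 vectors A_σ e₁, A_1 e₁, …, A_d e₁ ∈ ℝ^r
are linearly independent. -/
theorem stmt13 (N d r : ℕ) (hN : 1 ≤ N) (hd : 1 ≤ d) (hr : d + 1 ≤ r)
    (D : Fin d → Matrix (Fin N) (Fin N) ℝ) (hD : ∀ i, (D i)ᵀ = -(D i))
    (k : Fin N → ℝ)
    (H : Matrix (Fin d) (Fin d) ℝ)
    (hH : ∀ i j, H i j = (D i *ᵥ k) ⬝ᵥ (D j *ᵥ k))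
    (hHinv : IsUnit H.det)
    (X : Matrix (Fin N) (Fin r) ℝ) (hrank : X.rank = r)
    (hX0 : (fun i => X i (Fin.castLE hr 0)) = k)
    (hXi : ∀ m : Fin d, (fun i => X i (Fin.castLE hr m.succ)) = -(D m *ᵥ k))
    (Sg : Matrix (Fin N) (Fin N) ℝ) (hSg : Sg.PosDef)
    (Aσ : Matrix (Fin r) (Fin r) ℝ) (hAσ : Aσ = Xᵀ * Sg * X)
    (A : Fin d → Matrix (Fin r) (Fin r) ℝ) (hA : ∀ i, A i = Xᵀ * D i * X)
    (e1 : Fin r → ℝ) (he1 : e1 = fun j : Fin r => if (j : ℕ) = 0 then (1 : ℝ) else 0) :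
    LinearIndependent ℝ
      (Fin.cons (Aσ *ᵥ e1) (fun i => A i *ᵥ e1) : Fin (d + 1) → Fin r → ℝ) := by
  have hXe : X *ᵥ e1 = k := by
    have : e1 = Pi.single (Fin.castLE hr 0) 1 := by
      rw [he1]
      ext j
      simp [Pi.single_apply, Fin.ext_iff]
    rw [this, mulVec_single_one]
    exact hX0
  have hk : k ≠ 0 := by
    rintro rfl
    have : Nonempty (Fin d) := ⟨⟨0, hd⟩⟩
    have hH0 : H = 0 := by
      ext i j
      simp [hH]
    rw [hH0, det_zero] at hHinv
    exact not_isUnit_zero hHinv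
  rw [Fintype.linearIndependent_iff]
  intro g hg
  set w : Fin N → ℝ := g 0 • (Sg *ᵥ k) + ∑ j : Fin d, g j.succ • (D j *ᵥ k) with hw
  have hXw : Xᵀ *ᵥ w = 0 := by
    rw [← hg, Fin.sum_univ_succ, hw, mulVec_add, mulVec_smul, mulVec_sum]
    simp only [Fin.cons_zero, Fin.cons_succ, hAσ, hA, ← mulVec_mulVec, hXe, mulVec_smul]
  have hcol0 : k ⬝ᵥ w = 0 := by
    rw [← hX0]
    exact congrFun hXw (Fin.castLE hr 0)
  have hcol : ∀ m, (D m *ᵥ k) ⬝ᵥ w = 0 := by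
    intro m
    have h : (fun i => X i (Fin.castLE hr m.succ)) ⬝ᵥ w = 0 :=
      congrFun hXw (Fin.castLE hr m.succ)
    rwa [hXi, neg_dotProduct, neg_eq_zero] at h
  have hpos : 0 < k ⬝ᵥ (Sg *ᵥ k) := by
    simpa using hSg.dotProduct_mulVec_pos hk
  have hg0 : g 0 = 0 := by
    simp only [hw, dotProduct_add, dotProduct_smul, dotProduct_sum,
      skew_quadratic_form_eq_zero _ (hD _), mul_zero, Finset.sum_const_zero, add_zero,
      smul_eq_mul] at hcol0
    exact (mul_eq_zero.mp hcol0).resolve_right hpos.ne'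
  have hHg : H *ᵥ (fun j => g j.succ) = 0 := by
    ext m
    have h := hcol m
    simp only [hw, hg0, zero_smul, zero_add, dotProduct_sum, dotProduct_smul, smul_eq_mul] at h
    simpa [mulVec, dotProduct, hH, mul_comm] using h
  have hgs : (fun j : Fin d => g j.succ) = 0 :=
    eq_zero_of_mulVec_eq_zero hHinv.ne_zero hHg
  intro i
  refine Fin.cases hg0 (fun j => congrFun hgs j) i
end
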